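/- Let q = p^n be a prime power, take r = 3, k = q^2 + q + 1, and 0 ≤ a,b ≤ q−2. Let T_3(a,b) = {x ∈ 𝔽_q : x^3 = ω^{ak} and (x+1)^3 = ω^{bk}}. Then #T_3(a,b) + 6 ≤ (a,b)_{q−1} ≤ #T_3(a,b) + 3·⌊(2q+2)/3⌋. In particular, 6 ≤ (a,b)_{q−1} ≤ 2q + 4. -/

import Mathlib

/-- `x` lies in the cyclotomic coset `C_a = ω^a ⟨ω^e⟩` of `Fˣ`. -/
def InCycCoset {F : Type*} [Field F] (ω : Fˣ) (e a : ℕ) (x : Fˣ) : Prop :=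
  ∃ m : ℕ, x = ω ^ a * (ω ^ e) ^ m

/-- The cyclotomic number `(a,b)_e` : the number of `x ∈ C_a` with `x + 1 ∈ C_b`. -/
noncomputable def cycNum {F : Type*} [Field F] (ω : Fˣ) (e a b : ℕ) : ℕ :=
  Nat.card {x : Fˣ | InCycCoset ω e a x ∧ ∃ y : Fˣ, InCycCoset ω e b y ∧ (y : F) = (x : F) + 1}

/-!
The coset `C_a` is the fibre of the norm `N : 𝔽_{q^r}ˣ → 𝔽_qˣ` over `ζ ^ a`, where `ζ = N ω`, so
`(a,b)_{q-1}` counts the `x` with `N x = ζ ^ a` and `N (x + 1) = ζ ^ b`. For prime `r`, those lying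
in `𝔽_q` form `T_r(a,b)`, and the others are the roots, `r` for each polynomial, of the monic
irreducible polynomials of degree `r` with prescribed values at `0` and `-1`.

For `r = 3` the monic cubics with the prescribed (nonzero) values at `0` and `-1` form a pencil of
`q` members, and such a cubic is irreducible unless it has a root. Each of the `q - 2` elements
`u ≠ 0, -1` is a root of exactly one member, and a member has at most three roots, so between
`(q - 2) / 3` and `q - 2` members are reducible. The last bound follows from `#T_3(a,b) ≤ 2`.
-/

open Polynomial Module

section Minpoly

variable {K L : Type*} [Field K] [Field L] [Algebra K L]

lemma charpoly_lmul_eq_minpoly [FiniteDimensional K L] {x : L}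
    (hx : (minpoly K x).natDegree = finrank K L) :
    (Algebra.lmul K L x).charpoly = minpoly K x := by
  refine (eq_of_monic_of_dvd_of_natDegree_le (minpoly.monic (Algebra.IsIntegral.isIntegral x))
    (LinearMap.charpoly_monic _) (minpoly.dvd K x (Algebra.aeval_self_charpoly_lmul x)) ?_)
  rw [LinearMap.charpoly_natDegree, hx]

lemma norm_algebraMap_sub_eq_eval_minpoly [FiniteDimensional K L] {x : L}
    (hx : (minpoly K x).natDegree = finrank K L) (c : K) :
    Algebra.norm K (algebraMap K L c - x) = (minpoly K x).eval c := by
  rw [← charpoly_lmul_eq_minpoly hx, LinearMap.eval_charpoly, Algebra.norm_apply, map_sub,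
    AlgHom.commutes]

lemma norm_neg_eq_neg_one_pow_mul (x : L) :
    Algebra.norm K (-x) = (-1) ^ finrank K L * Algebra.norm K x := by
  rw [neg_eq_neg_one_mul, map_mul, ← Algebra.norm_algebraMap, map_neg (algebraMap K L), map_one]

lemma natDegree_minpoly_eq_finrank_iff_of_prime (hr : (finrank K L).Prime) {x : L} :
    (minpoly K x).natDegree = finrank K L ↔ x ∉ Set.range (algebraMap K L) := by
  have : FiniteDimensional K L := FiniteDimensional.of_finrank_pos hr.pos
  rw [← RingHom.coe_range, SetLike.mem_coe, ← minpoly.natDegree_eq_one_iff]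
  refine ⟨fun h h1 ↦ hr.ne_one (h.symm.trans h1), fun h ↦ ?_⟩
  have hdvd := minpoly.degree_dvd (Algebra.IsIntegral.isIntegral (R := K) x)
  exact (hr.eq_one_or_self_of_dvd _ hdvd).resolve_left h

lemma minpoly_eq_iff_mem_rootSet {f : K[X]} (hmonic : f.Monic) (hirr : Irreducible f) {x : L} :
    minpoly K x = f ↔ x ∈ f.rootSet L := by
  rw [mem_rootSet]
  constructor
  · rintro rfl
    exact ⟨hmonic.ne_zero, minpoly.aeval K x⟩
  · rintro ⟨-, hroot⟩
    exact (minpoly.eq_of_irreducible_of_monic hirr hroot hmonic).symm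

end Minpoly

section FiniteFieldRoots

variable {K L : Type*} [Field K] [Field L] [Algebra K L] [Finite L]

lemma ncard_rootSet_eq_natDegree_of_dvd_finrank {f : K[X]} (hf : Irreducible f)
    (hdvd : f.natDegree ∣ finrank K L) : (f.rootSet L).ncard = f.natDegree := by
  have : Fact (Irreducible f) := ⟨hf⟩
  have hfinrank : finrank K (AdjoinRoot f) = f.natDegree := finrank_quotient_span_eq_natDegree
  have hroots : {x // x ∈ f.aroots L} ≃ f.rootSet L := Equiv.subtypeEquivRight fun x ↦ by
    rw [mem_rootSet, mem_aroots]
  rw [← Nat.card_coe_set_eq, ← Nat.card_congr hroots,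
    ← Nat.card_congr (AdjoinRoot.equiv L K f hf.ne_zero),
    FiniteField.natCard_algHom_of_finrank_dvd (hfinrank ▸ hdvd), hfinrank]

lemma ncard_preimage_minpoly {d : ℕ} (hd : d ∣ finrank K L) {S : Set K[X]}
    (hS : ∀ f ∈ S, f.Monic ∧ Irreducible f ∧ f.natDegree = d) :
    (minpoly K ⁻¹' S : Set L).ncard = d * S.ncard := by
  classical
  have hfiber (f) (hf : f ∈ S) : {x : L | minpoly K x = f}.ncard = d := by
    obtain ⟨hmonic, hirr, rfl⟩ := hS f hf
    rw [← ncard_rootSet_eq_natDegree_of_dvd_finrank hirr hd]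
    congr 1
    ext x
    exact minpoly_eq_iff_mem_rootSet hmonic hirr
  have hS_finite : S.Finite := (Set.finite_range (minpoly K (B := L))).subset fun f hf ↦ by
    obtain ⟨x, rfl⟩ : {x : L | minpoly K x = f}.Nonempty := by
      rw [← Set.ncard_pos, hfiber f hf, ← (hS f hf).2.2]
      exact (hS f hf).2.1.natDegree_pos
    exact Set.mem_range_self x
  have := Fintype.ofFinite L
  lift S to Finset K[X] using hS_finite
  rw [Set.ncard_coe_finset, Set.ncard_eq_toFinset_card',
    Finset.card_eq_sum_card_fiberwise (f := minpoly K) (t := S) fun x hx ↦ by simpa using hx]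
  refine (Finset.sum_const_nat fun f hf ↦ ?_).trans (mul_comm _ _)
  rw [← hfiber f hf, Set.ncard_eq_toFinset_card']
  congr 1
  ext x
  simpa using fun hx ↦ hx ▸ hf

end FiniteFieldRoots

section PrimeDegree

/-- The possible minimal polynomials of the elements `x` outside `K` of an extension of prime degree
`r` with `N x = α` and `N (x + 1) = β`: the norms are read off at `0` and `-1` because
`N (c - x)` is the value at `c` of the minimal polynomial of `x`. -/
def irreduciblesWithNorms {K : Type*} [Field K] (r : ℕ) (α β : K) : Set K[X] :=
  {f | f.Monic ∧ Irreducible f ∧ f.natDegree = r ∧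
    f.eval 0 = (-1) ^ r * α ∧ f.eval (-1) = (-1) ^ r * β}

variable {K L : Type*} [Field K] [Field L] [Algebra K L]

lemma minpoly_mem_irreduciblesWithNorms_iff [FiniteDimensional K L] {x : L} {α β : K} :
    minpoly K x ∈ irreduciblesWithNorms (finrank K L) α β ↔
      (minpoly K x).natDegree = finrank K L ∧
        Algebra.norm K x = α ∧ Algebra.norm K (x + 1) = β := by
  have hx_int : IsIntegral K x := Algebra.IsIntegral.isIntegral x
  have hsign : ((-1) ^ finrank K L : K) ≠ 0 := by simp
  simp only [irreduciblesWithNorms, Set.mem_ofPred_eq, minpoly.monic hx_int,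
    minpoly.irreducible hx_int, true_and]
  refine and_congr_right fun hdeg ↦ ?_
  rw [← norm_algebraMap_sub_eq_eval_minpoly hdeg, ← norm_algebraMap_sub_eq_eval_minpoly hdeg,
    map_zero, zero_sub, map_neg (algebraMap K L), map_one, ← neg_add', add_comm 1 x,
    norm_neg_eq_neg_one_pow_mul, norm_neg_eq_neg_one_pow_mul, mul_right_inj' hsign,
    mul_right_inj' hsign]

theorem ncard_norm_eq_and_norm_add_one_eq [Finite L] (hr : (finrank K L).Prime) (α β : K) :
    {x : L | Algebra.norm K x = α ∧ Algebra.norm K (x + 1) = β}.ncard =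
      {x : K | x ^ finrank K L = α ∧ (x + 1) ^ finrank K L = β}.ncard +
        finrank K L * (irreduciblesWithNorms (finrank K L) α β).ncard := by
  set A : Set L := {x | Algebra.norm K x = α ∧ Algebra.norm K (x + 1) = β} with hA
  have : FiniteDimensional K L := FiniteDimensional.of_finrank_pos hr.pos
  have h_inter : A ∩ Set.range (algebraMap K L) =
      algebraMap K L '' {x : K | x ^ finrank K L = α ∧ (x + 1) ^ finrank K L = β} := by
    rw [← Set.image_preimage_eq_inter_range]
    congr 1
    ext u
    simp only [hA, Set.mem_preimage, Set.mem_ofPred_eq, ← Algebra.norm_algebraMap (S := L),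
      map_add, map_one]
  have h_diff : A \ Set.range (algebraMap K L) =
      minpoly K ⁻¹' irreduciblesWithNorms (finrank K L) α β := by
    ext x
    rw [Set.mem_preimage, minpoly_mem_irreduciblesWithNorms_iff,
      natDegree_minpoly_eq_finrank_iff_of_prime hr, Set.mem_sdiff, and_comm]
    rfl
  rw [← Set.ncard_inter_add_ncard_sdiff_eq_ncard A (Set.range (algebraMap K L)), h_inter,
    Set.ncard_image_of_injective _ (algebraMap K L).injective, h_diff,
    ncard_preimage_minpoly dvd_rfl fun f hf ↦ ⟨hf.1, hf.2.1, hf.2.2.1⟩]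

end PrimeDegree

section CyclotomicNumber

variable {K L : Type*} [Field K] [Field L] [Algebra K L] [Finite L]

lemma orderOf_unitsMap_norm_of_generator {ω : Lˣ} (hω : ∀ x : Lˣ, x ∈ Subgroup.zpowers ω) :
    orderOf (Units.map (Algebra.norm K) ω) = Nat.card K - 1 := by
  rw [← Nat.card_units]
  refine orderOf_eq_card_of_forall_mem_zpowers fun y ↦ ?_
  obtain ⟨x, rfl⟩ := FiniteField.unitsMap_norm_surjective K L y
  obtain ⟨m, rfl⟩ := hω x
  exact ⟨m, (map_zpow _ ω m).symm⟩

lemma inCycCoset_iff_norm_eq {ω : Lˣ} (hω : ∀ x : Lˣ, x ∈ Subgroup.zpowers ω) (a : ℕ) (x : Lˣ) :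
    InCycCoset ω (Nat.card K - 1) a x ↔
      Algebra.norm K (x : L) = Algebra.norm K (ω : L) ^ a := by
  set N : Lˣ →* Kˣ := Units.map (Algebra.norm K) with hN
  have horder : orderOf (N ω) = Nat.card K - 1 := orderOf_unitsMap_norm_of_generator hω
  suffices InCycCoset ω (Nat.card K - 1) a x ↔ N x = N ω ^ a by
    simpa [hN, Units.ext_iff] using this
  constructor
  · rintro ⟨m, rfl⟩
    rw [map_mul, map_pow, map_pow, map_pow, ← horder, pow_orderOf_eq_one, one_pow, mul_one]
  · intro hx
    obtain ⟨j, hj : ω ^ j = (ω ^ a)⁻¹ * x⟩ := mem_powers_iff_mem_zpowers.2 (hω ((ω ^ a)⁻¹ * x))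
    have hNj : N ω ^ j = 1 := by
      rw [← map_pow, hj, map_mul, map_inv, map_pow, hx, inv_mul_cancel]
    obtain ⟨m, rfl⟩ := horder ▸ orderOf_dvd_of_pow_eq_one hNj
    exact ⟨m, by rw [← pow_mul, hj, mul_inv_cancel_left]⟩

theorem cycNum_eq_ncard_norm_eq {ω : Lˣ} (hω : ∀ x : Lˣ, x ∈ Subgroup.zpowers ω) (a b : ℕ) :
    cycNum ω (Nat.card K - 1) a b =
      {x : L | Algebra.norm K x = Algebra.norm K (ω : L) ^ a ∧
        Algebra.norm K (x + 1) = Algebra.norm K (ω : L) ^ b}.ncard := by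
  have : FiniteDimensional K L := Module.Finite.of_finite
  have hne {c : ℕ} {x : L} (hx : Algebra.norm K x = Algebra.norm K (ω : L) ^ c) : x ≠ 0 := by
    rintro rfl
    rw [Algebra.norm_zero] at hx
    exact pow_ne_zero c (Algebra.norm_ne_zero_iff.2 ω.ne_zero) hx.symm
  rw [cycNum, Nat.card_coe_set_eq, ← Set.ncard_image_of_injective _ Units.val_injective]
  congr 1
  ext x
  simp only [Set.mem_image, Set.mem_ofPred_eq, inCycCoset_iff_norm_eq hω]
  constructor
  · rintro ⟨x, ⟨hx, y, hy, hxy⟩, rfl⟩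
    exact ⟨hx, hxy ▸ hy⟩
  · rintro ⟨hx, hx1⟩
    exact ⟨Units.mk0 x (hne hx), ⟨hx, Units.mk0 (x + 1) (hne hx1), hx1, rfl⟩, rfl⟩

theorem cycNum_eq_ncard_pow_eq_add (hr : (finrank K L).Prime) {ω : Lˣ}
    (hω : ∀ x : Lˣ, x ∈ Subgroup.zpowers ω) {ζ : K} (hζ : Algebra.norm K (ω : L) = ζ) (a b : ℕ) :
    cycNum ω (Nat.card K - 1) a b =
      {x : K | x ^ finrank K L = ζ ^ a ∧ (x + 1) ^ finrank K L = ζ ^ b}.ncard +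
        finrank K L * (irreduciblesWithNorms (finrank K L) (ζ ^ a) (ζ ^ b)).ncard := by
  rw [cycNum_eq_ncard_norm_eq hω, hζ, ncard_norm_eq_and_norm_add_one_eq hr]

end CyclotomicNumber

section CubicPencil

variable {K : Type*} [Field K]

/-- The pencil of all monic cubics with value `-α` at `0` and `-β` at `-1`; the parameter `s` is the
sum of the roots. -/
noncomputable def cubicPencil (α β s : K) : K[X] :=
  X ^ 3 + C (β - α - 1) * X - C α - C s * (X * (X + 1))

lemma natDegree_cubicPencil (α β s : K) : (cubicPencil α β s).natDegree = 3 := by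
  rw [cubicPencil]
  compute_degree!

lemma monic_cubicPencil (α β s : K) : (cubicPencil α β s).Monic := by
  rw [cubicPencil]
  monicity!

lemma eval_cubicPencil (α β s u : K) :
    (cubicPencil α β s).eval u = u ^ 3 + (β - α - 1) * u - α - s * (u * (u + 1)) := by
  simp [cubicPencil]

lemma cubicPencil_injective (α β : K) : Function.Injective (cubicPencil α β) := fun s t h ↦ by
  have hne : (X : K[X]) + 1 ≠ 0 := X_add_C_ne_zero 1
  simpa [cubicPencil, hne] using h

lemma eq_cubicPencil_of_eval {f : K[X]} {α β : K} (hmonic : f.Monic) (hdeg : f.natDegree = 3)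
    (hzero : f.eval 0 = -α) (hneg_one : f.eval (-1) = -β) :
    f = cubicPencil α β (-f.coeff 2) := by
  have hlead : f.coeff 3 = 1 := hdeg ▸ hmonic.coeff_natDegree
  have hexpand : f = C (f.coeff 0) + C (f.coeff 1) * X + C (f.coeff 2) * X ^ 2 + X ^ 3 := by
    conv_lhs => rw [f.as_sum_range_C_mul_X_pow, hdeg]
    simp [Finset.sum_range_succ, hlead]
  have hcoeff_zero : f.coeff 0 = -α := by rw [coeff_zero_eq_eval_zero, hzero]
  have hcoeff_one : f.coeff 1 = β - α - 1 + f.coeff 2 := by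
    rw [hexpand] at hneg_one
    simp only [eval_add, eval_mul, eval_pow, eval_C, eval_X] at hneg_one
    linear_combination hcoeff_zero - hneg_one
  rw [hcoeff_zero, hcoeff_one] at hexpand
  rw [cubicPencil]
  conv_lhs => rw [hexpand]
  simp only [C_add, C_neg]
  ring

lemma irreducible_cubicPencil_iff (α β s : K) :
    Irreducible (cubicPencil α β s) ↔ ¬∃ u, (cubicPencil α β s).IsRoot u := by
  rw [(monic_cubicPencil α β s).irreducible_iff_roots_eq_zero_of_degree_le_three
    (by rw [natDegree_cubicPencil]; norm_num) (natDegree_cubicPencil α β s).le]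
  simp [Multiset.eq_zero_iff_forall_notMem, (monic_cubicPencil α β s).ne_zero]

lemma irreduciblesWithNorms_three (α β : K) :
    irreduciblesWithNorms 3 α β =
      cubicPencil α β '' {s | ∃ u, (cubicPencil α β s).IsRoot u}ᶜ := by
  ext f
  constructor
  · rintro ⟨hmonic, hirr, hdeg, hzero, hneg_one⟩
    have hf : f = cubicPencil α β (-f.coeff 2) :=
      eq_cubicPencil_of_eval hmonic hdeg (by rw [hzero]; ring) (by rw [hneg_one]; ring)
    exact ⟨_, (irreducible_cubicPencil_iff α β _).1 (hf ▸ hirr), hf.symm⟩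
  · rintro ⟨s, hs, rfl⟩
    refine ⟨monic_cubicPencil α β s, (irreducible_cubicPencil_iff α β s).2 hs,
      natDegree_cubicPencil α β s, ?_, ?_⟩ <;>
    · rw [eval_cubicPencil]
      ring

/-- The parameter of the only member of `cubicPencil α β` that vanishes at `u`. At the base points
`u = 0` and `u = -1` of the pencil this is a division by zero. -/
def cubicPencilParam (α β u : K) : K :=
  (u ^ 3 + (β - α - 1) * u - α) / (u * (u + 1))

lemma isRoot_cubicPencil_iff {α β : K} (hα : α ≠ 0) (hβ : β ≠ 0) (s u : K) :
    (cubicPencil α β s).IsRoot u ↔ u ∈ ({0, -1}ᶜ : Set K) ∧ cubicPencilParam α β u = s := by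
  rw [IsRoot, eval_cubicPencil]
  by_cases hu : u ∈ ({0, -1} : Set K)
  · have : u ∉ ({0, -1}ᶜ : Set K) := not_not.2 hu
    simp only [this, false_and, iff_false]
    rcases hu with rfl | rfl
    · simpa using hα
    · ring_nf
      simpa using hβ
  · have hdenom : u * (u + 1) ≠ 0 := by
      simpa [not_or, eq_neg_iff_add_eq_zero] using hu
    rw [Set.mem_compl_iff, and_iff_right hu, cubicPencilParam, div_eq_iff hdenom, sub_eq_zero]

lemma setOf_exists_isRoot_cubicPencil {α β : K} (hα : α ≠ 0) (hβ : β ≠ 0) :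
    {s | ∃ u, (cubicPencil α β s).IsRoot u} = cubicPencilParam α β '' {0, -1}ᶜ := by
  ext s
  simp only [Set.mem_ofPred_eq, isRoot_cubicPencil_iff hα hβ, Set.mem_image]

variable [Finite K]

lemma ncard_compl_zero_neg_one : ({0, -1}ᶜ : Set K).ncard + 2 = Nat.card K := by
  rw [← Set.ncard_add_ncard_compl ({0, -1} : Set K), Set.ncard_pair (by simp), add_comm]

lemma ncard_setOf_exists_isRoot_cubicPencil_le {α β : K} (hα : α ≠ 0) (hβ : β ≠ 0) :
    {s | ∃ u, (cubicPencil α β s).IsRoot u}.ncard + 2 ≤ Nat.card K := by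
  rw [setOf_exists_isRoot_cubicPencil hα hβ, ← ncard_compl_zero_neg_one (K := K)]
  exact Nat.add_le_add_right (Set.ncard_image_le (Set.toFinite {0, -1}ᶜ)) 2

lemma card_le_three_mul_ncard_setOf_exists_isRoot_cubicPencil {α β : K} (hα : α ≠ 0) (hβ : β ≠ 0) :
    Nat.card K ≤ 3 * {s | ∃ u, (cubicPencil α β s).IsRoot u}.ncard + 2 := by
  classical
  have := Fintype.ofFinite K
  rw [setOf_exists_isRoot_cubicPencil hα hβ, ← ncard_compl_zero_neg_one (K := K)]
  gcongr
  rw [Set.ncard_eq_toFinset_card', Set.ncard_eq_toFinset_card', Set.toFinset_image]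
  refine Finset.card_le_mul_card_image _ 3 fun s _ ↦ ?_
  calc
    _ ≤ (cubicPencil α β s).roots.toFinset.card := Finset.card_le_card fun u hu ↦ by
      rw [Finset.mem_filter, Set.mem_toFinset, ← isRoot_cubicPencil_iff hα hβ] at hu
      rwa [Multiset.mem_toFinset, mem_roots (monic_cubicPencil α β s).ne_zero]
    _ ≤ (cubicPencil α β s).natDegree := (Multiset.toFinset_card_le _).trans (card_roots' _)
    _ = 3 := natDegree_cubicPencil α β s

theorem ncard_irreduciblesWithNorms_three_bounds {α β : K} (hα : α ≠ 0) (hβ : β ≠ 0) :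
    2 ≤ (irreduciblesWithNorms 3 α β).ncard ∧
      3 * (irreduciblesWithNorms 3 α β).ncard ≤ 2 * Nat.card K + 2 := by
  rw [irreduciblesWithNorms_three, Set.ncard_image_of_injective _ (cubicPencil_injective α β)]
  have hcompl := Set.ncard_add_ncard_compl {s | ∃ u, (cubicPencil α β s).IsRoot u}
  have hle := ncard_setOf_exists_isRoot_cubicPencil_le hα hβ
  have hge := card_le_three_mul_ncard_setOf_exists_isRoot_cubicPencil hα hβ
  omega

end CubicPencil

section PowersOfShift

variable {K : Type*} [Field K]

lemma degree_X_add_one_pow_sub_X_pow_sub_C_lt {r : ℕ} (hr : r ≠ 0) (c : K) :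
    ((X + 1) ^ r - X ^ r - C c : K[X]).degree < r := by
  have hmonic : ((X + 1) ^ r : K[X]).Monic := (monic_X_add_C 1).pow r
  have hdeg : ((X + 1) ^ r : K[X]).degree = r := by
    simpa using congrArg (r • ·) (degree_X_add_C (1 : K))
  refine (degree_sub_le _ _).trans_lt (max_lt ?_ ?_)
  · exact hdeg ▸ degree_sub_lt_left (by rw [hdeg, degree_X_pow]) hmonic.ne_zero
      (by rw [hmonic.leadingCoeff, (monic_X_pow r).leadingCoeff])
  · exact degree_C_le.trans_lt (by exact_mod_cast hr.bot_lt)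

lemma X_add_one_pow_sub_X_pow_sub_C_ne_zero {r : ℕ} (hr : 1 < r) (hchar : (r : K) ≠ 0) (c : K) :
    ((X + 1) ^ r - X ^ r - C c : K[X]) ≠ 0 := by
  obtain ⟨m, rfl⟩ := Nat.exists_eq_add_of_le' hr
  intro h
  have hcoeff : (((m + 2).choose (m + 1) : ℕ) : K) = 0 := by
    simpa [coeff_X_add_one_pow, coeff_X_pow, coeff_C] using congrArg (coeff · (m + 1)) h
  rw [Nat.choose_succ_self_right] at hcoeff
  exact hchar hcoeff

lemma ncard_pow_eq_and_add_one_pow_eq_lt {r : ℕ} (hr : r.Prime) (α β : K) :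
    {x : K | x ^ r = α ∧ (x + 1) ^ r = β}.ncard < r := by
  classical
  by_cases hchar : (r : K) = 0
  · have : Fact r.Prime := ⟨hr⟩
    have : CharP K r := (CharP.charP_iff_prime_eq_zero hr).2 hchar
    have hsub : {x : K | x ^ r = α ∧ (x + 1) ^ r = β}.Subsingleton := fun x hx y hy ↦
      frobenius_inj K r (hx.1.trans hy.1.symm)
    have := hsub.finite.to_subtype
    exact (Set.ncard_le_one_iff_subsingleton.2 hsub).trans_lt hr.one_lt
  · set g : K[X] := (X + 1) ^ r - X ^ r - C (β - α) with hg
    have hg_ne : g ≠ 0 := X_add_one_pow_sub_X_pow_sub_C_ne_zero hr.one_lt hchar _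
    have hsub : {x : K | x ^ r = α ∧ (x + 1) ^ r = β} ⊆ g.roots.toFinset := by
      rintro x ⟨hx, hx_add_one⟩
      rw [Finset.mem_coe, Multiset.mem_toFinset, mem_roots hg_ne]
      simp [hg, hx, hx_add_one]
    calc
      _ ≤ g.roots.toFinset.card := by
        rw [← Set.ncard_coe_finset]
        exact Set.ncard_le_ncard hsub
      _ ≤ g.natDegree := (Multiset.toFinset_card_le _).trans (card_roots' _)
      _ < r := (natDegree_lt_iff_degree_lt hg_ne).2
        (degree_X_add_one_pow_sub_X_pow_sub_C_lt hr.ne_zero _)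

end PowersOfShift

/-- For `r = 3`, `k = q^2 + q + 1`, `ζ = ω^k` viewed in `𝔽_q`, and
`T_3(a,b) = {x ∈ 𝔽_q : x^3 = ζ^a, (x+1)^3 = ζ^b}`, the cyclotomic number satisfies
`#T_3(a,b) + 6 ≤ (a,b)_{q-1} ≤ #T_3(a,b) + 3⌊(2q+2)/3⌋`; in particular
`6 ≤ (a,b)_{q-1} ≤ 2q + 4`. -/
theorem cycNum_r_three_bounds {p n q : ℕ} (hp : p.Prime) (hn : 1 ≤ n) (hq : q = p ^ n)
    {K F : Type*} [Field K] [Field F] [Fintype K] [Fintype F] [Algebra K F]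
    (hK : Fintype.card K = q) (hF : Fintype.card F = q ^ 3)
    (ω : Fˣ) (hω : ∀ x : Fˣ, x ∈ Subgroup.zpowers ω)
    (ζ : K) (hζ : algebraMap K F ζ = (ω : F) ^ (q ^ 2 + q + 1))
    (a b : ℕ) (ha : a ≤ q - 2) (hb : b ≤ q - 2) :
    (Nat.card {x : K | x ^ 3 = ζ ^ a ∧ (x + 1) ^ 3 = ζ ^ b} + 6 ≤ cycNum ω (q - 1) a b ∧
      cycNum ω (q - 1) a b ≤
        Nat.card {x : K | x ^ 3 = ζ ^ a ∧ (x + 1) ^ 3 = ζ ^ b} + 3 * ((2 * q + 2) / 3)) ∧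
    (6 ≤ cycNum ω (q - 1) a b ∧ cycNum ω (q - 1) a b ≤ 2 * q + 4) := by
  have hcard : Nat.card K = q := by rw [Nat.card_eq_fintype_card, hK]
  have hrank : finrank K F = 3 :=
    Nat.pow_right_injective (hK ▸ Fintype.one_lt_card) <| by
      simp only [← Module.card_eq_pow_finrank, hF, ← hK]
  have hnorm : Algebra.norm K (ω : F) = ζ := (algebraMap K F).injective <| by
    rw [FiniteField.algebraMap_norm_eq_pow_sum, hrank, hcard, hζ]
    simp only [Finset.sum_range_succ, Finset.sum_range_zero]
    ring
  have hζ_ne : ζ ≠ 0 := hnorm ▸ Algebra.norm_ne_zero_iff.2 ω.ne_zero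
  have hcyc := cycNum_eq_ncard_pow_eq_add (hrank ▸ Nat.prime_three) hω hnorm a b
  have hT := ncard_pow_eq_and_add_one_pow_eq_lt Nat.prime_three (ζ ^ a) (ζ ^ b)
  have hirr :=
    ncard_irreduciblesWithNorms_three_bounds (pow_ne_zero a hζ_ne) (pow_ne_zero b hζ_ne)
  rw [hrank, hcard] at hcyc
  rw [hcard] at hirr
  rw [Nat.card_coe_set_eq]
  omega
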